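/- Let p(·) : ℝ^d → (0,∞) be a measurable exponent function with 0 < p_- ≤ p_+ < ∞ which is locally log-Hölder continuous at every point, and suppose there exists x₀ ∈ ℝ^d such that p(x₀) = p_- and the essential infimum of p over every ball B_r(x₀) equals p_-. Then there exists C > 0 such that the growth envelope function of L_{p(·)}(ℝ^d) satisfies E_G(L_{p(·)})(t) ≤ C · t^{-1/p_-} for all 0 < t ≤ 1. -/

import Mathlib

open MeasureTheory ENNReal Set Filter

noncomputable section

/-- One-variable `L_p` quasi-norm of an `ℝ≥0∞`-valued function (essential sup if `p = ∞`). -/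
def lpNorm1 {α : Type} [MeasurableSpace α] (p : ℝ≥0∞) (μ : Measure α)
    (g : α → ℝ≥0∞) : ℝ≥0∞ :=
  if p = ∞ then essSup g μ else (∫⁻ x, g x ^ p.toReal ∂μ) ^ (1 / p.toReal)

/-- Mixed Lebesgue quasi-norm of an `ℝ≥0∞`-valued function on a product space:
the first coordinate is integrated innermost. -/
def mixedNormE : {d : ℕ} → {α : Fin d → Type} →
    [inst : ∀ i, MeasurableSpace (α i)] → (μ : ∀ i, Measure (α i)) →
    (p : Fin d → ℝ≥0∞) → ((∀ i, α i) → ℝ≥0∞) → ℝ≥0∞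
  | 0, _, _, _, _, f => f finZeroElim
  | (d + 1), α, inst, μ, p, f =>
      @mixedNormE d (fun i => α i.succ) (fun i => inst i.succ)
        (fun i => μ i.succ) (fun i => p i.succ)
        (fun y => lpNorm1 (p 0) (μ 0) fun x => f (Fin.cons x y))

/-- Mixed Lebesgue quasi-norm `‖f‖_{p⃗}` of a real-valued function. -/
def mixedNorm {d : ℕ} {α : Fin d → Type} [∀ i, MeasurableSpace (α i)]
    (μ : ∀ i, Measure (α i)) (p : Fin d → ℝ≥0∞) (f : (∀ i, α i) → ℝ) : ℝ≥0∞ :=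
  mixedNormE μ p fun x => ENNReal.ofReal |f x|

/-- Mixed Lorentz quasi-norm `‖f‖_{L_{p⃗,q}}`. -/
def mixedLorentzNorm {d : ℕ} {α : Fin d → Type} [∀ i, MeasurableSpace (α i)]
    (μ : ∀ i, Measure (α i)) (p : Fin d → ℝ≥0∞) (q : ℝ≥0∞) (f : (∀ i, α i) → ℝ) : ℝ≥0∞ :=
  if q = ∞ then
    ⨆ (u : ℝ) (_ : 0 < u),
      ENNReal.ofReal u * mixedNorm μ p ({x | u < |f x|}.indicator fun _ => (1 : ℝ))
  else
    (∫⁻ u in Set.Ioi (0 : ℝ),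
        (ENNReal.ofReal u * mixedNorm μ p ({x | u < |f x|}.indicator fun _ => (1 : ℝ))) ^ q.toReal
          / ENNReal.ofReal u) ^ (1 / q.toReal)

/-- Non-increasing rearrangement `f^*(t)` (with `inf ∅ = ∞`). -/
def rearr {α : Type} [MeasurableSpace α] (μ : Measure α) (f : α → ℝ) (t : ℝ) : ℝ≥0∞ :=
  sInf {s : ℝ≥0∞ | μ {x | s < ENNReal.ofReal |f x|} ≤ ENNReal.ofReal t}

/-- Growth envelope function of the quasi-normed function space given by the quasi-norm `N`. -/
def growthEnv {α : Type} [MeasurableSpace α] (μ : Measure α)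
    (N : (α → ℝ) → ℝ≥0∞) (t : ℝ) : ℝ≥0∞ :=
  ⨆ (f : α → ℝ) (_ : Measurable f) (_ : N f ≤ 1), rearr μ f t

/-- The Hardy-type functional `( ∫_0^ε ( t^{pinv} f^*(t) )^v dt/t )^{1/v}`,
with the usual `sup` modification for `v = ∞`. -/
def hardy {α : Type} [MeasurableSpace α] (μ : Measure α)
    (pinv : ℝ) (v : ℝ≥0∞) (ε : ℝ) (f : α → ℝ) : ℝ≥0∞ :=
  if v = ∞ then ⨆ (t : ℝ) (_ : t ∈ Set.Ioo 0 ε), ENNReal.ofReal t ^ pinv * rearr μ f t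
  else
    (∫⁻ t in Set.Ioo (0 : ℝ) ε,
        (ENNReal.ofReal t ^ pinv * rearr μ f t) ^ v.toReal / ENNReal.ofReal t) ^ (1 / v.toReal)

/-- The modular `ϱ_{p(·)}(f) = ∫ |f(x)|^{p(x)} dμ(x)`. -/
def varModular {α : Type} [MeasurableSpace α] (μ : Measure α)
    (p : α → ℝ) (f : α → ℝ) : ℝ≥0∞ :=
  ∫⁻ x, ENNReal.ofReal (|f x| ^ p x) ∂μ

/-- The variable Lebesgue quasi-norm `‖f‖_{p(·)}`. -/
def varNorm {α : Type} [MeasurableSpace α] (μ : Measure α)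
    (p : α → ℝ) (f : α → ℝ) : ℝ≥0∞ :=
  ⨅ (l : ℝ) (_ : 0 < l) (_ : varModular μ p (fun x => f x / l) ≤ 1), ENNReal.ofReal l

/-- The variable Lorentz quasi-norm `‖f‖_{L_{p(·),q}}`. -/
def varLorentzNorm {α : Type} [MeasurableSpace α] (μ : Measure α)
    (p : α → ℝ) (q : ℝ≥0∞) (f : α → ℝ) : ℝ≥0∞ :=
  if q = ∞ then
    ⨆ (u : ℝ) (_ : 0 < u),
      ENNReal.ofReal u * varNorm μ p ({x | u < |f x|}.indicator fun _ => (1 : ℝ))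
  else
    (∫⁻ u in Set.Ioi (0 : ℝ),
        (ENNReal.ofReal u * varNorm μ p ({x | u < |f x|}.indicator fun _ => (1 : ℝ))) ^ q.toReal
          / ENNReal.ofReal u) ^ (1 / q.toReal)

/-- Local log-Hölder continuity at a point `x₀`. -/
def LocLogHolderAt {E : Type} [PseudoMetricSpace E] (p : E → ℝ) (x₀ : E) : Prop :=
  ∃ C₀ > (0 : ℝ), ∀ x, dist x x₀ < 1 / 2 → |p x - p x₀| ≤ C₀ / (-Real.log (dist x x₀))

/-- Local log-Hölder continuity (at every point, with a uniform constant). -/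
def LocLogHolder {E : Type} [PseudoMetricSpace E] (p : E → ℝ) : Prop :=
  ∃ C₀ > (0 : ℝ), ∀ x y, dist x y < 1 / 2 → |p x - p y| ≤ C₀ / (-Real.log (dist x y))

end

/-!
The bound is Chebyshev's inequality for the modular. Let `m > 0` be an essential lower bound of
`p` and `a = t ^ (-1 / m)`. As `t ≤ 1`, we have `a ≥ 1`, so `|g x| ≥ a` forces
`|g x| ^ p x ≥ a ^ m = 1 / t` for almost every such `x`. Hence `{|g| ≥ a}` has measure at most `t`
as soon as the modular of `g` is at most `1`. Applying this to `g = f / l` for every `l` admissible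
in the definition of `‖f‖` gives `f^*(t) ≤ ‖f‖ a`, so the constant `1` suffices.
-/

section VariableLebesgue

variable {α : Type} [MeasurableSpace α] {μ : Measure α} {p f : α → ℝ} {m t : ℝ}

theorem rearr_le_ofReal_of_measure_le {s : ℝ} (hs : 0 ≤ s)
    (h : μ {x | s < |f x|} ≤ ENNReal.ofReal t) :
    rearr μ f t ≤ ENNReal.ofReal s :=
  sInf_le <| by simpa only [mem_ofPred_eq, ENNReal.ofReal_lt_ofReal_iff_of_nonneg hs] using h

theorem rpow_mul_measure_le_abs_le_varModular (hp : AEMeasurable p μ) (hf : AEMeasurable f μ)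
    (hm : 0 ≤ m) (hmp : ∀ᵐ x ∂μ, m ≤ p x) {a : ℝ} (ha : 1 ≤ a) :
    ENNReal.ofReal (a ^ m) * μ {x | a ≤ |f x|} ≤ varModular μ p f := by
  have rpow_le : ∀ᵐ x ∂μ, a ≤ |f x| →
      ENNReal.ofReal (a ^ m) ≤ ENNReal.ofReal (|f x| ^ p x) := by
    filter_upwards [hmp] with x hx hax
    gcongr
    calc
      a ^ m ≤ |f x| ^ m := by gcongr
      _ ≤ |f x| ^ p x := Real.rpow_le_rpow_of_exponent_le (ha.trans hax) hx
  calc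
    ENNReal.ofReal (a ^ m) * μ {x | a ≤ |f x|}
      ≤ ENNReal.ofReal (a ^ m) *
          μ {x | ENNReal.ofReal (a ^ m) ≤ ENNReal.ofReal (|f x| ^ p x)} := by
        gcongr 1
        exact measure_mono_ae rpow_le
    _ ≤ varModular μ p f := mul_meas_ge_le_lintegral₀ (hf.abs.pow hp).ennreal_ofReal _

theorem measure_rpow_le_abs_le_of_varModular_le_one (hp : AEMeasurable p μ)
    (hf : AEMeasurable f μ) (hm : 0 < m) (hmp : ∀ᵐ x ∂μ, m ≤ p x) (ht : 0 < t) (ht1 : t ≤ 1)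
    (hmod : varModular μ p f ≤ 1) :
    μ {x | t ^ (-(1 / m)) ≤ |f x|} ≤ ENNReal.ofReal t := by
  have one_le : 1 ≤ t ^ (-(1 / m)) :=
    Real.one_le_rpow_of_pos_of_le_one_of_nonpos ht ht1 (neg_nonpos.2 (by positivity))
  have rpow_eq : (t ^ (-(1 / m))) ^ m = t⁻¹ := by
    rw [← Real.rpow_mul ht.le, neg_mul, one_div_mul_cancel hm.ne', Real.rpow_neg_one]
  have chebyshev := (rpow_mul_measure_le_abs_le_varModular hp hf hm.le hmp one_le).trans hmod
  rwa [rpow_eq, ENNReal.ofReal_inv_of_pos ht, mul_comm, ← div_eq_mul_inv,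
    ENNReal.div_le_iff (by simpa using ht) ofReal_ne_top, one_mul] at chebyshev

theorem rearr_le_varNorm_mul_rpow (hp : AEMeasurable p μ) (hf : AEMeasurable f μ) (hm : 0 < m)
    (hmp : ∀ᵐ x ∂μ, m ≤ p x) (ht : 0 < t) (ht1 : t ≤ 1) :
    rearr μ f t ≤ varNorm μ p f * ENNReal.ofReal (t ^ (-(1 / m))) := by
  have hpos : 0 < t ^ (-(1 / m)) := Real.rpow_pos_of_pos ht _
  rw [← ENNReal.div_le_iff (by simpa using hpos) ofReal_ne_top]
  refine le_iInf fun l => le_iInf fun hl => le_iInf fun hmod => ?_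
  rw [ENNReal.div_le_iff (by simpa using hpos) ofReal_ne_top, ← ENNReal.ofReal_mul hl.le]
  refine rearr_le_ofReal_of_measure_le (by positivity) ?_
  calc
    μ {x | l * t ^ (-(1 / m)) < |f x|} ≤ μ {x | t ^ (-(1 / m)) ≤ |f x / l|} := by
      refine measure_mono fun x (hx : l * t ^ (-(1 / m)) < |f x|) => ?_
      rw [mem_ofPred_eq, abs_div, abs_of_pos hl, le_div_iff₀' hl]
      exact hx.le
    _ ≤ ENNReal.ofReal t :=
      measure_rpow_le_abs_le_of_varModular_le_one hp (hf.div_const l) hm hmp ht ht1 hmod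

theorem statement15_general (hp : AEMeasurable p μ) (hm : 0 < m) (hmp : ∀ᵐ x ∂μ, m ≤ p x)
    (ht : 0 < t) (ht1 : t ≤ 1) :
    growthEnv μ (varNorm μ p) t ≤ ENNReal.ofReal (t ^ (-(1 / m))) :=
  iSup_le fun f => iSup_le fun hf => iSup_le fun hN => calc
    rearr μ f t ≤ varNorm μ p f * ENNReal.ofReal (t ^ (-(1 / m))) :=
      rearr_le_varNorm_mul_rpow hp hf.aemeasurable hm hmp ht ht1
    _ ≤ ENNReal.ofReal (t ^ (-(1 / m))) := mul_le_of_le_one_left' hN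

end VariableLebesgue

/-- Upper estimate for the growth envelope function of `L_{p(·)}(ℝ^d)`:
if `0 < p_- ≤ p_+ < ∞`, `p(·)` is locally log-Hölder continuous, and `p` attains its
essential infimum at `x₀` (also over every ball centred at `x₀`), then
`E_G(L_{p(·)})(t) ≤ C · t^{-1/p_-}` for `0 < t ≤ 1`. -/
theorem statement15 (d : ℕ) (p : EuclideanSpace ℝ (Fin d) → ℝ) (hpmeas : Measurable p)
    (hp0 : ∀ x, 0 < p x)
    (hpm : 0 < essInf p (volume : Measure (EuclideanSpace ℝ (Fin d))))
    (hpp : IsBoundedUnder (· ≤ ·) (ae (volume : Measure (EuclideanSpace ℝ (Fin d)))) p)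
    (hLH : LocLogHolder p)
    (x₀ : EuclideanSpace ℝ (Fin d))
    (hx₀ : p x₀ = essInf p (volume : Measure (EuclideanSpace ℝ (Fin d))))
    (hballs : ∀ r > (0 : ℝ), essInf p (volume.restrict (Metric.ball x₀ r)) =
      essInf p (volume : Measure (EuclideanSpace ℝ (Fin d)))) :
    ∃ C > (0 : ℝ), ∀ t : ℝ, 0 < t → t ≤ 1 →
      growthEnv (volume : Measure (EuclideanSpace ℝ (Fin d))) (varNorm volume p) t ≤
        ENNReal.ofReal C *
          ENNReal.ofReal
            (t ^ (-(1 / essInf p (volume : Measure (EuclideanSpace ℝ (Fin d)))))) := by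
  have hp_ae : ∀ᵐ x, essInf p volume ≤ p x :=
    ae_essInf_le (isBoundedUnder_of ⟨0, fun x => (hp0 x).le⟩)
  exact ⟨1, one_pos, fun t ht ht1 => by
    simpa using statement15_general hpmeas.aemeasurable hpm hp_ae ht ht1⟩
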